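/- arXiv:2510.25490 — 10 statements merged into one kernel-verified Lean document; each statement's English description precedes it below -/
import Mathlib

section
/- Let T be a positive integer, v : {1,…,T} → ℝ nondecreasing, a : {1,…,T} → ℝ with a_h ≥ 0 for all h, and suppose Σ_{h=1}^{T} a_h ≥ 1. Let t̄ be the least index t with Σ_{h=1}^{t} a_h ≥ 1, and for each t define S_t = v_t·(1 − Σ_{h=1}^{t−1} a_h) + Σ_{h=1}^{t−1} v_h·a_h. Then for every t with 1 ≤ t ≤ t̄ one has S_t ≤ S_{t̄}. -/
/-- for a nondecreasing sequence `v` on `{1, …, T}` and nonnegative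
activation levels `a` with total at least `1`, letting `tb` be the least index whose
cumulative activation reaches `1` and `S t` the `t`-th supermodular right-hand side,
one has `S t ≤ S tb` for every `t ≤ tb`. -/
theorem stmt_3 (T : ℕ) (hT : 1 ≤ T) (v a : ℕ → ℝ)
    (hmono : ∀ h₁ ∈ Finset.Icc 1 T, ∀ h₂ ∈ Finset.Icc 1 T, h₁ ≤ h₂ → v h₁ ≤ v h₂)
    (ha : ∀ h ∈ Finset.Icc 1 T, 0 ≤ a h)
    (hsum : 1 ≤ ∑ h ∈ Finset.Icc 1 T, a h)
    (tb : ℕ) (htb1 : 1 ≤ tb) (htbT : tb ≤ T)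
    (htbge : 1 ≤ ∑ h ∈ Finset.Icc 1 tb, a h)
    (htbmin : ∀ t, 1 ≤ t → t < tb → ∑ h ∈ Finset.Icc 1 t, a h < 1)
    (S : ℕ → ℝ)
    (hS : ∀ t, S t = v t * (1 - ∑ h ∈ Finset.Icc 1 (t - 1), a h) +
      ∑ h ∈ Finset.Icc 1 (t - 1), v h * a h)
    (t : ℕ) (ht1 : 1 ≤ t) (httb : t ≤ tb) :
    S t ≤ S tb := by
  have key : ∀ n, t ≤ n → n ≤ tb → S t ≤ S n := by
    intro n hn
    induction n, hn using Nat.le_induction with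
    | base => intro _; exact le_refl _
    | succ n hn ih =>
      intro hle
      refine (ih (by omega)).trans ?_
      have h1 := htbmin n (by omega) (by omega)
      have h2 : v n ≤ v (n + 1) :=
        hmono n (Finset.mem_Icc.2 ⟨by omega, by omega⟩) (n + 1)
          (Finset.mem_Icc.2 ⟨by omega, by omega⟩) (by omega)
      obtain ⟨m, rfl⟩ : ∃ m, n = m + 1 := ⟨n - 1, by omega⟩
      rw [hS (m + 1), hS (m + 1 + 1)]
      simp only [Nat.add_sub_cancel]
      rw [Finset.sum_Icc_succ_top (by omega)] at h1
      rw [Finset.sum_Icc_succ_top (by omega), Finset.sum_Icc_succ_top (by omega)]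
      nlinarith [mul_nonneg (sub_nonneg.2 h2) (sub_nonneg.2 h1.le)]
  exact key tb httb le_rfl
end

section
/- Let T be a positive integer, v : {1,…,T} → ℝ nondecreasing, a : {1,…,T} → ℝ with a_h ≥ 0 for all h, and suppose Σ_{h=1}^{T} a_h ≥ 1. Let t̄ be the least index t with Σ_{h=1}^{t} a_h ≥ 1, and for each t define S_t = v_t·(1 − Σ_{h=1}^{t−1} a_h) + Σ_{h=1}^{t−1} v_h·a_h. Then for every t with t̄ ≤ t ≤ T one has S_t ≤ S_{t̄}. -/
/-- for a nondecreasing sequence `v` on `{1, …, T}` and nonnegative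
activation levels `a` with total at least `1`, letting `tb` be the least index whose
cumulative activation reaches `1` and `S t` the `t`-th supermodular right-hand side,
one has `S t ≤ S tb` for every `tb ≤ t ≤ T`. -/
theorem stmt_4 (T : ℕ) (hT : 1 ≤ T) (v a : ℕ → ℝ)
    (hmono : ∀ h₁ ∈ Finset.Icc 1 T, ∀ h₂ ∈ Finset.Icc 1 T, h₁ ≤ h₂ → v h₁ ≤ v h₂)
    (ha : ∀ h ∈ Finset.Icc 1 T, 0 ≤ a h)
    (hsum : 1 ≤ ∑ h ∈ Finset.Icc 1 T, a h)
    (tb : ℕ) (htb1 : 1 ≤ tb) (htbT : tb ≤ T)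
    (htbge : 1 ≤ ∑ h ∈ Finset.Icc 1 tb, a h)
    (htbmin : ∀ t, 1 ≤ t → t < tb → ∑ h ∈ Finset.Icc 1 t, a h < 1)
    (S : ℕ → ℝ)
    (hS : ∀ t, S t = v t * (1 - ∑ h ∈ Finset.Icc 1 (t - 1), a h) +
      ∑ h ∈ Finset.Icc 1 (t - 1), v h * a h)
    (t : ℕ) (ht1 : tb ≤ t) (htT : t ≤ T) :
    S t ≤ S tb := by
  induction t, ht1 using Nat.le_induction with
  | base => exact le_rfl
  | succ n hn ih =>
    refine le_trans ?_ (ih (by omega))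
    obtain ⟨m, rfl⟩ : ∃ m, n = m + 1 := ⟨n - 1, by omega⟩
    have hA : 1 ≤ ∑ h ∈ Finset.Icc 1 (m + 1), a h := by
      refine htbge.trans (Finset.sum_le_sum_of_subset_of_nonneg
        (Finset.Icc_subset_Icc le_rfl hn) ?_)
      intro i hi _
      rw [Finset.mem_Icc] at hi
      exact ha i (Finset.mem_Icc.2 ⟨hi.1, by omega⟩)
    have hv : v (m + 1) ≤ v (m + 1 + 1) :=
      hmono _ (Finset.mem_Icc.2 ⟨by omega, by omega⟩) _
        (Finset.mem_Icc.2 ⟨by omega, by omega⟩) (by omega)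
    rw [hS, hS]
    simp only [Nat.add_sub_cancel]
    have e1 := Finset.sum_Icc_succ_top (show 1 ≤ m + 1 by omega) a
    have e2 := Finset.sum_Icc_succ_top (show 1 ≤ m + 1 by omega) (fun h => v h * a h)
    rw [e1] at hA
    rw [e1, e2]
    nlinarith [mul_nonneg (sub_nonneg.2 hv) (sub_nonneg.2 hA)]
end

section
/- Let T be a positive integer, v : {1,…,T} → ℝ nondecreasing, a : {1,…,T} → ℝ with a_h ≥ 0 for all h, and suppose Σ_{h=1}^{T} a_h ≥ 1. Let t̄ be the least index t with Σ_{h=1}^{t} a_h ≥ 1, and for each t define S_t = v_t·(1 − Σ_{h=1}^{t−1} a_h) + Σ_{h=1}^{t−1} v_h·a_h. Then S_{t̄} = max_{1 ≤ t ≤ T} S_t; in particular, the least real number η satisfying η ≥ S_t for all t ∈ {1,…,T} is exactly S_{t̄} = v_{t̄}·(1 − Σ_{h=1}^{t̄−1} a_h) + Σ_{h=1}^{t̄−1} v_h·a_h. -/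
/-- with `v` nondecreasing on `{1, …, T}`, nonnegative activation levels `a`
summing to at least `1`, `tb` the least index whose cumulative activation reaches `1`, and
`S t` the `t`-th supermodular right-hand side, `S tb` is the maximum of the values `S t`
for `1 ≤ t ≤ T`; in particular the least real `η` satisfying `η ≥ S t` for all
`t ∈ {1, …, T}` is exactly `S tb`. -/
theorem stmt_5 (T : ℕ) (hT : 1 ≤ T) (v a : ℕ → ℝ)
    (hmono : ∀ h₁ ∈ Finset.Icc 1 T, ∀ h₂ ∈ Finset.Icc 1 T, h₁ ≤ h₂ → v h₁ ≤ v h₂)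
    (ha : ∀ h ∈ Finset.Icc 1 T, 0 ≤ a h)
    (hsum : 1 ≤ ∑ h ∈ Finset.Icc 1 T, a h)
    (tb : ℕ) (htb1 : 1 ≤ tb) (htbT : tb ≤ T)
    (htbge : 1 ≤ ∑ h ∈ Finset.Icc 1 tb, a h)
    (htbmin : ∀ t, 1 ≤ t → t < tb → ∑ h ∈ Finset.Icc 1 t, a h < 1)
    (S : ℕ → ℝ)
    (hS : ∀ t, S t = v t * (1 - ∑ h ∈ Finset.Icc 1 (t - 1), a h) +
      ∑ h ∈ Finset.Icc 1 (t - 1), v h * a h) :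
    IsGreatest {s : ℝ | ∃ t ∈ Finset.Icc 1 T, s = S t} (S tb) ∧
      IsLeast {η : ℝ | ∀ t ∈ Finset.Icc 1 T, S t ≤ η}
        (v tb * (1 - ∑ h ∈ Finset.Icc 1 (tb - 1), a h) +
          ∑ h ∈ Finset.Icc 1 (tb - 1), v h * a h) := by
  have step : ∀ t, 1 ≤ t →
      S (t + 1) - S t = (v (t + 1) - v t) * (1 - ∑ h ∈ Finset.Icc 1 t, a h) := by
    intro t ht
    obtain ⟨k, rfl⟩ : ∃ k, t = k + 1 := ⟨t - 1, by omega⟩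
    rw [hS, hS]
    simp only [Nat.add_sub_cancel]
    rw [Finset.sum_Icc_succ_top (by omega), Finset.sum_Icc_succ_top (by omega)]
    ring
  have hv : ∀ t, 1 ≤ t → t + 1 ≤ T → v t ≤ v (t + 1) := fun t h1 h2 =>
    hmono t (Finset.mem_Icc.2 ⟨h1, by omega⟩) (t + 1)
      (Finset.mem_Icc.2 ⟨by omega, h2⟩) (by omega)
  have up : ∀ d t, 1 ≤ t → t + d ≤ tb → S t ≤ S (t + d) := by
    intro d
    induction d with
    | zero => intro t _ _; simp
    | succ d ih =>
      intro t h1 h2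
      have h3 := ih t h1 (by omega)
      have h4 := step (t + d) (by omega)
      have h5 := htbmin (t + d) (by omega) (by omega)
      have h6 := hv (t + d) (by omega) (by omega)
      have h7 := mul_nonneg (sub_nonneg.2 h6) (sub_nonneg.2 h5.le)
      rw [← add_assoc]
      linarith
  have down : ∀ d, tb + d ≤ T → S (tb + d) ≤ S tb := by
    intro d
    induction d with
    | zero => intro _; simp
    | succ d ih =>
      intro h2
      have h3 := ih (by omega)
      have h4 := step (tb + d) (by omega)
      have h5 : ∑ h ∈ Finset.Icc 1 tb, a h ≤ ∑ h ∈ Finset.Icc 1 (tb + d), a h := by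
        apply Finset.sum_le_sum_of_subset_of_nonneg
        · exact Finset.Icc_subset_Icc_right (by omega)
        · intro i hi _
          rw [Finset.mem_Icc] at hi
          exact ha i (Finset.mem_Icc.2 ⟨hi.1, by omega⟩)
      have h6 := hv (tb + d) (by omega) (by omega)
      have h7 := mul_nonneg (sub_nonneg.2 h6) (sub_nonneg.2 (htbge.trans h5))
      rw [← add_assoc]
      linarith
  have key : ∀ t ∈ Finset.Icc 1 T, S t ≤ S tb := by
    intro t ht
    rw [Finset.mem_Icc] at ht
    rcases le_total t tb with h | h
    · obtain ⟨d, rfl⟩ := Nat.exists_eq_add_of_le h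
      exact up d t ht.1 le_rfl
    · obtain ⟨d, rfl⟩ := Nat.exists_eq_add_of_le h
      exact down d ht.2
  have hmem : tb ∈ Finset.Icc 1 T := Finset.mem_Icc.2 ⟨htb1, htbT⟩
  rw [← hS tb]
  refine ⟨⟨⟨tb, hmem, rfl⟩, ?_⟩, key, fun η hη => hη tb hmem⟩
  rintro s ⟨t, ht, rfl⟩
  exact key t ht
end

section
/- Let T be a positive integer, v : {1,…,T} → ℝ nondecreasing, and a : {1,…,T} → {0,1} binary with Σ_{h=1}^{T} a_h ≥ 1. Let t̄ be the least index t with a_t = 1 (equivalently, the least t with Σ_{h=1}^{t} a_h ≥ 1), and for each t define S_t = v_t·(1 − Σ_{h=1}^{t−1} a_h) + Σ_{h=1}^{t−1} v_h·a_h. Then Σ_{h=1}^{t̄−1} a_h = 0 and the least real number η satisfying η ≥ S_t for all t equals v_{t̄}; that is, for binary activation values the optimal routing cost of the commodity in FZ-S equals the smallest sorted routing value whose associated variable is activated. -/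
/-- Lemma 2 of the paper, abstract form: with `v` nondecreasing on
`{1, …, T}` and binary activation values `a` with at least one activation, letting `tb`
be the least activated index and `S t` the `t`-th supermodular right-hand side, the
cumulative activation before `tb` vanishes and the least real `η` satisfying `η ≥ S t`
for all `t` equals `v tb`, the smallest sorted routing value whose variable is activated. -/
theorem stmt_6 (T : ℕ) (hT : 1 ≤ T) (v a : ℕ → ℝ)
    (hmono : ∀ h₁ ∈ Finset.Icc 1 T, ∀ h₂ ∈ Finset.Icc 1 T, h₁ ≤ h₂ → v h₁ ≤ v h₂)
    (ha01 : ∀ h ∈ Finset.Icc 1 T, a h = 0 ∨ a h = 1)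
    (hsum : 1 ≤ ∑ h ∈ Finset.Icc 1 T, a h)
    (tb : ℕ) (htbmem : tb ∈ Finset.Icc 1 T) (htbact : a tb = 1)
    (htbmin : ∀ t ∈ Finset.Icc 1 T, t < tb → a t ≠ 1)
    (S : ℕ → ℝ)
    (hS : ∀ t, S t = v t * (1 - ∑ h ∈ Finset.Icc 1 (t - 1), a h) +
      ∑ h ∈ Finset.Icc 1 (t - 1), v h * a h) :
    (∑ h ∈ Finset.Icc 1 (tb - 1), a h = 0) ∧
      IsLeast {η : ℝ | ∀ t ∈ Finset.Icc 1 T, S t ≤ η} (v tb) := by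
  obtain ⟨h1, hT'⟩ := Finset.mem_Icc.mp htbmem
  have hz : ∀ h ∈ Finset.Icc 1 (tb - 1), a h = 0 := by
    intro h hh
    obtain ⟨hh1, hh2⟩ := Finset.mem_Icc.mp hh
    have hm : h ∈ Finset.Icc 1 T := Finset.mem_Icc.mpr ⟨hh1, by omega⟩
    exact (ha01 h hm).resolve_right (htbmin h hm (by omega))
  have hS' : ∀ t, S t = v t - ∑ h ∈ Finset.Icc 1 (t - 1), (v t - v h) * a h := by
    intro t
    rw [hS t]
    simp only [sub_mul, Finset.sum_sub_distrib, ← Finset.mul_sum]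
    ring
  have hnn : ∀ t ∈ Finset.Icc 1 T, ∀ h ∈ Finset.Icc 1 (t - 1), 0 ≤ (v t - v h) * a h := by
    intro t ht h hh
    obtain ⟨hh1, hh2⟩ := Finset.mem_Icc.mp hh
    have ht' := Finset.mem_Icc.mp ht
    have hm : h ∈ Finset.Icc 1 T := Finset.mem_Icc.mpr ⟨hh1, by omega⟩
    have hv := hmono h hm t ht (by omega)
    refine mul_nonneg (by linarith) ?_
    rcases ha01 h hm with e | e <;> rw [e] <;> norm_num
  refine ⟨Finset.sum_eq_zero hz, ?_, ?_⟩
  · intro t ht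
    rw [hS' t]
    rcases le_or_gt t tb with hle | hlt
    · have := Finset.sum_nonneg (hnn t ht)
      have := hmono t ht tb htbmem hle
      linarith
    · have := Finset.single_le_sum (hnn t ht)
        (Finset.mem_Icc.mpr ⟨h1, by omega⟩ : tb ∈ Finset.Icc 1 (t - 1))
      rw [htbact] at this
      linarith
  · intro η hη
    have h2 := hη tb htbmem
    rw [hS' tb, Finset.sum_eq_zero (fun h hh => by rw [hz h hh, mul_zero])] at h2
    linarith
end

section
/- Consider the MA-HLP data: finite node set V, edge set E of unordered pairs of distinct nodes, finite nonempty commodity set R with commodities r = (o^r, d^r, w^r), w^r ≥ 0, nonnegative symmetric unit costs c satisfying the triangle inequality with c(i,i)=0, factors 0 ≤ α ≤ 1, γ, θ ≥ 0, and setup costs f_i ≥ 0. For each r let the candidate routing values { F_re : e ∈ E^r } ∪ { H_ri : i ∈ V^r } together with a value M exceeding all of them (the fictitious edge) be sorted nondecreasingly as v̄_{r1} ≤ … ≤ v̄_{rT_r}, with position sets T^r_y (edge values, position h carrying edge e_h) and T^r_z (node values, position h carrying node i_h). Let ȳ ∈ [0,1]^{E∪{ẽ}} and z̄ ∈ [0,1]^V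 be such that for each r ∈ R, Σ_{h ∈ T^r_y} ȳ_{e_h} + Σ_{h ∈ T^r_z} z̄_{i_h} ≥ 1, and let t̄_r be the least t with Σ_{h ∈ T^r_y, h ≤ t} ȳ_{e_h} + Σ_{h ∈ T^r_z, h ≤ t} z̄_{i_h} ≥ 1. Then the minimum over η : R → ℝ with η^r ≥ 0 and η^r ≥ v̄_{rt} + Σ_{h ∈ T^r_y, h < t}(v̄_{rh} − v̄_{rt})·ȳ_{e_h} + Σ_{h ∈ T^r_z, h < t}(v̄_{rh} − v̄_{rt})·z̄_{i_h} for all t, of the objective Σ_{i∈V} f_i z̄_i + Σ_{r∈R} η^r, equals Σ_{i∈V} f_i z̄_i + Σ_{r∈R} [ v̄_{r t̄_r}·(1 − Σ_{h < t̄_r} ȳ_{e_h} − Σ_{h < t̄_r} z̄_{i_h}) + Σ_{h ∈ T^r_y, h < t̄_r} v̄_{rh}·ȳ_{e_h} + Σ_{h ∈ T^r_z, h < t̄_r} v̄_{rh}·z̄_{i_h} ]. -/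
open Finset

lemma core_bound (A : Finset ℕ) (v x : ℕ → ℝ) (hx : ∀ h, 0 ≤ x h)
    (hm : ∀ a ∈ A, ∀ b ∈ A, a ≤ b → v a ≤ v b) (s t : ℕ) (hs : s ∈ A) (ht : t ∈ A)
    (h1 : 1 ≤ ∑ h ∈ A.filter (· ≤ s), x h) (h2 : ∑ h ∈ A.filter (· < s), x h ≤ 1) :
    v t + ∑ h ∈ A.filter (· < t), (v h - v t) * x h ≤
      v s + ∑ h ∈ A.filter (· < s), (v h - v s) * x h := by
  have key : ∀ (B : Finset ℕ) (a b : ℝ), ∑ h ∈ B, (v h - a) * x h =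
      ∑ h ∈ B, (v h - b) * x h - (a - b) * ∑ h ∈ B, x h := by
    intro B a b
    rw [mul_sum, ← sum_sub_distrib]
    exact sum_congr rfl fun h _ => by ring
  rcases le_or_gt t s with hts | hst
  · have e : ∑ h ∈ A.filter (· < t), (v h - v t) * x h ≤
        ∑ h ∈ A.filter (· < s), (v h - v t) * x h := by
      apply sum_le_sum_of_subset_of_nonneg
      · intro h hh
        simp only [mem_filter] at hh ⊢
        exact ⟨hh.1, by omega⟩
      · intro h hh hn
        simp only [mem_filter, not_and, not_lt] at hh hn
        exact mul_nonneg (sub_nonneg.2 (hm _ ht _ hh.1 (hn hh.1))) (hx h)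
    rw [key _ (v s) (v t)]
    nlinarith [hm _ ht _ hs hts]
  · have e : ∑ h ∈ A.filter (· ≤ s), (v t - v h) * x h ≤
        ∑ h ∈ A.filter (· < t), (v t - v h) * x h := by
      apply sum_le_sum_of_subset_of_nonneg
      · intro h hh
        simp only [mem_filter] at hh ⊢
        exact ⟨hh.1, by omega⟩
      · intro h hh _
        simp only [mem_filter] at hh
        exact mul_nonneg (sub_nonneg.2 (hm _ hh.1 _ ht hh.2.le)) (hx h)
    have neg : ∀ B : Finset ℕ, ∑ h ∈ B, (v t - v h) * x h = -∑ h ∈ B, (v h - v t) * x h := by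
      intro B
      rw [← sum_neg_distrib]
      exact sum_congr rfl fun h _ => by ring
    rw [neg, neg, key (A.filter (· ≤ s)) (v t) (v s)] at e
    have e2 : ∑ h ∈ A.filter (· < s), (v h - v s) * x h =
        ∑ h ∈ A.filter (· ≤ s), (v h - v s) * x h := by
      apply sum_subset
      · intro h hh
        simp only [mem_filter] at hh ⊢
        exact ⟨hh.1, by omega⟩
      · intro h hh hn
        simp only [mem_filter, not_and, not_lt] at hh hn
        have : h = s := le_antisymm hh.2 (hn hh.1)
        simp [this]
    rw [e2]
    nlinarith [hm _ hs _ ht hst.le]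


/-- closed form for the optimal value of the η-minimization of the LP
relaxation of FZ-S at fixed activation values `ȳ, z̄`.  For each commodity `r` the sorted
candidate routing values `v r 1 ≤ … ≤ v r (Tr r)` (nonnegative, including the arbitrarily
large value of the fictitious edge) occupy edge positions `Ty r` (position `h` carrying
edge `er r h`, possibly the fictitious edge `none`) and node positions `Tz r` (position
`h` carrying node `ir r h`).  If the total activation of each commodity is at least `1`
and `tbar r` is the least position where the cumulative activation reaches `1`, then the
minimum of `∑ i, f i * z̄ i + ∑ r, η r` over all `η ≥ 0` satisfying the supermodular
constraints equals the claimed closed-form value. -/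
theorem stmt_8 {V : Type*} [Fintype V] [DecidableEq V]
    {R : Type*} [Fintype R] [Nonempty R]
    (f : V → ℝ) (hf : ∀ i, 0 ≤ f i)
    (Tr : R → ℕ) (hTr : ∀ r, 1 ≤ Tr r)
    (v : R → ℕ → ℝ)
    (hv0 : ∀ r, ∀ h ∈ Finset.Icc 1 (Tr r), 0 ≤ v r h)
    (hmono : ∀ r, ∀ h₁ ∈ Finset.Icc 1 (Tr r), ∀ h₂ ∈ Finset.Icc 1 (Tr r),
      h₁ ≤ h₂ → v r h₁ ≤ v r h₂)
    (Ty Tz : R → Finset ℕ)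
    (hdisj : ∀ r, Disjoint (Ty r) (Tz r))
    (hpart : ∀ r, Ty r ∪ Tz r = Finset.Icc 1 (Tr r))
    (er : R → ℕ → Option (Sym2 V)) (ir : R → ℕ → V)
    (ybar : Option (Sym2 V) → ℝ) (zbar : V → ℝ)
    (hy : ∀ e, ybar e ∈ Set.Icc (0 : ℝ) 1) (hz : ∀ i, zbar i ∈ Set.Icc (0 : ℝ) 1)
    (hcov : ∀ r, 1 ≤ (∑ h ∈ Ty r, ybar (er r h)) + ∑ h ∈ Tz r, zbar (ir r h))
    (tbar : R → ℕ)
    (htbmem : ∀ r, tbar r ∈ Finset.Icc 1 (Tr r))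
    (htbge : ∀ r, 1 ≤ (∑ h ∈ (Ty r).filter (· ≤ tbar r), ybar (er r h)) +
      ∑ h ∈ (Tz r).filter (· ≤ tbar r), zbar (ir r h))
    (htbmin : ∀ r, ∀ t < tbar r,
      (∑ h ∈ (Ty r).filter (· ≤ t), ybar (er r h)) +
        (∑ h ∈ (Tz r).filter (· ≤ t), zbar (ir r h)) < 1) :
    IsLeast
      {obj : ℝ | ∃ η : R → ℝ, (∀ r, 0 ≤ η r) ∧
        (∀ r, ∀ t ∈ Finset.Icc 1 (Tr r),
          v r t + (∑ h ∈ (Ty r).filter (· < t), (v r h - v r t) * ybar (er r h)) +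
            (∑ h ∈ (Tz r).filter (· < t), (v r h - v r t) * zbar (ir r h)) ≤ η r) ∧
        obj = (∑ i, f i * zbar i) + ∑ r, η r}
      ((∑ i, f i * zbar i) + ∑ r,
        (v r (tbar r) *
            (1 - (∑ h ∈ (Ty r).filter (· < tbar r), ybar (er r h)) -
              ∑ h ∈ (Tz r).filter (· < tbar r), zbar (ir r h)) +
          (∑ h ∈ (Ty r).filter (· < tbar r), v r h * ybar (er r h)) +
          ∑ h ∈ (Tz r).filter (· < tbar r), v r h * zbar (ir r h))) := by
  classical
  let x : R → ℕ → ℝ := fun r h => if h ∈ Ty r then ybar (er r h) else zbar (ir r h)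
  have hx : ∀ r h, 0 ≤ x r h := by
    intro r h
    simp only [x]
    split_ifs
    · exact (hy _).1
    · exact (hz _).1
  have conv : ∀ r (p : ℕ → Prop) [DecidablePred p] (a : ℕ → ℝ),
      (∑ h ∈ (Ty r).filter p, a h * ybar (er r h)) + ∑ h ∈ (Tz r).filter p, a h * zbar (ir r h)
        = ∑ h ∈ (Finset.Icc 1 (Tr r)).filter p, a h * x r h := by
    intro r p _ a
    rw [← hpart r, filter_union, sum_union (disjoint_filter_filter (hdisj r))]
    congr 1
    · refine sum_congr rfl fun h hh => ?_
      simp [x, (mem_filter.1 hh).1]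
    · refine sum_congr rfl fun h hh => ?_
      have : h ∉ Ty r := fun h' => disjoint_left.1 (hdisj r) h' (mem_filter.1 hh).1
      simp [x, this]
  have conv1 : ∀ r (p : ℕ → Prop) [DecidablePred p],
      (∑ h ∈ (Ty r).filter p, ybar (er r h)) + ∑ h ∈ (Tz r).filter p, zbar (ir r h)
        = ∑ h ∈ (Finset.Icc 1 (Tr r)).filter p, x r h := by
    intro r p _
    simpa using conv r p (fun _ => 1)
  have hlt : ∀ r, ∑ h ∈ (Finset.Icc 1 (Tr r)).filter (· < tbar r), x r h ≤ 1 := by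
    intro r
    have h1 := (mem_Icc.1 (htbmem r)).1
    have := htbmin r (tbar r - 1) (by omega)
    rw [conv1] at this
    have e : (Finset.Icc 1 (Tr r)).filter (· < tbar r) =
        (Finset.Icc 1 (Tr r)).filter (· ≤ tbar r - 1) :=
      filter_congr fun h _ => by omega
    rw [e]
    exact this.le
  have closed : ∀ r, (v r (tbar r) *
            (1 - (∑ h ∈ (Ty r).filter (· < tbar r), ybar (er r h)) -
              ∑ h ∈ (Tz r).filter (· < tbar r), zbar (ir r h)) +
          (∑ h ∈ (Ty r).filter (· < tbar r), v r h * ybar (er r h)) +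
          ∑ h ∈ (Tz r).filter (· < tbar r), v r h * zbar (ir r h)) =
      v r (tbar r) * (1 - ∑ h ∈ (Finset.Icc 1 (Tr r)).filter (· < tbar r), x r h) +
        ∑ h ∈ (Finset.Icc 1 (Tr r)).filter (· < tbar r), v r h * x r h := by
    intro r
    rw [← conv, ← conv1]
    ring
  have closed2 : ∀ r, v r (tbar r) *
        (1 - ∑ h ∈ (Finset.Icc 1 (Tr r)).filter (· < tbar r), x r h) +
        ∑ h ∈ (Finset.Icc 1 (Tr r)).filter (· < tbar r), v r h * x r h =
      v r (tbar r) + ∑ h ∈ (Finset.Icc 1 (Tr r)).filter (· < tbar r),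
        (v r h - v r (tbar r)) * x r h := by
    intro r
    simp only [sub_mul, sum_sub_distrib, ← mul_sum]
    ring
  simp only [closed]
  constructor
  · refine ⟨_, ?_, ?_, rfl⟩
    · intro r
      refine add_nonneg (mul_nonneg (hv0 r _ (htbmem r)) (sub_nonneg.2 (hlt r))) ?_
      exact sum_nonneg fun h hh => mul_nonneg (hv0 r _ (mem_filter.1 hh).1) (hx r h)
    · intro r t ht
      have hge := htbge r
      rw [conv1] at hge
      have := core_bound _ (v r) (x r) (hx r) (hmono r) (tbar r) t (htbmem r) ht hge (hlt r)
      rw [add_assoc, conv r (· < t) (fun h => v r h - v r t), closed2]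
      exact this
  · rintro obj ⟨η, -, hη, rfl⟩
    gcongr with r _
    have := hη r _ (htbmem r)
    rw [add_assoc, conv r (· < tbar r) (fun h => v r h - v r (tbar r))] at this
    rw [closed2]
    exact this
end

section
/- Let (z, y, x) be any feasible solution of the LP relaxation of FZ-P, i.e. z : V → [0,1], y : E → [0,1], x : R × E → ℝ_{≥0} with Σ_{e∈E} x_re = 1 for all r, x_re ≤ y_e for all r, e, and Σ_{e∈δ(i)} x_re ≤ z_i for all r, i. Then there exists X : R × V × V → ℝ_{≥0} such that (z, X) is feasible for the LP relaxation of HLP_MA (i.e. Σ_{i,j∈V} X_rij = 1 for all r and X_rii + Σ_{j≠i}(X_rij + X_rji) ≤ z_i for all r, i) and Σ_r Σ_{i,j∈V} C_rij X_rij = Σ_r Σ_{e∈E} F̄_re x_re; in particular the LP relaxation optimal value of HLP_MA is at most that of FZ-P. Such an X is obtained by assigning, for each r and each edge e = {i,j}, the mass x_re to a pair among (i,j), (j,i), (i,i), (j,j) achieving the minimum F̄_re = min{C_rij, C_rji, C_rii, C_rjj}. -/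
open Finset

/-- Cost `C_rij` of routing commodity `r` through the ordered hub pair `(i, j)`. -/
def routeCost {V : Type*} {R : Type*} (c : V → V → ℝ) (α γ θ : ℝ)
    (o d : R → V) (w : R → ℝ) (r : R) (i j : V) : ℝ :=
  w r * (γ * c (o r) i + α * c i j + θ * c j (d r))

/-- Cost `H_ri` of routing commodity `r` through the single hub `i`. -/
def hubCost {V : Type*} {R : Type*} (c : V → V → ℝ) (γ θ : ℝ)
    (o d : R → V) (w : R → ℝ) (r : R) (i : V) : ℝ :=
  w r * (γ * c (o r) i + θ * c i (d r))

/-- Aggregated routing cost `F̄_re = min {C_rij, C_rji, H_ri, H_rj}` of commodity `r`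
via the unordered edge `e = {i, j}`. -/
def FbarCost {V : Type*} {R : Type*} (c : V → V → ℝ) (α γ θ : ℝ)
    (o d : R → V) (w : R → ℝ) (r : R) : Sym2 V → ℝ :=
  Sym2.lift ⟨fun i j =>
      min (min (routeCost c α γ θ o d w r i j) (routeCost c α γ θ o d w r j i))
        (min (hubCost c γ θ o d w r i) (hubCost c γ θ o d w r j)),
    fun i j => by
      dsimp only
      rw [min_comm (routeCost c α γ θ o d w r i j) (routeCost c α γ θ o d w r j i),
        min_comm (hubCost c γ θ o d w r i) (hubCost c γ θ o d w r j)]⟩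

/-- The edge set `E`: unordered pairs of distinct nodes. -/
noncomputable def edgeSet (V : Type*) [Fintype V] [DecidableEq V] : Finset (Sym2 V) :=
  Finset.univ.filter fun e => ¬ e.IsDiag

/-- Feasibility for the LP relaxation of formulation FZ-P. -/
noncomputable def FZPfeasible {V : Type*} [Fintype V] [DecidableEq V] {R : Type*} [Fintype R]
    (z : V → ℝ) (y : Sym2 V → ℝ) (x : R → Sym2 V → ℝ) : Prop :=
  (∀ i, z i ∈ Set.Icc (0 : ℝ) 1) ∧
  (∀ e ∈ edgeSet V, y e ∈ Set.Icc (0 : ℝ) 1) ∧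
  (∀ r, ∀ e ∈ edgeSet V, 0 ≤ x r e) ∧
  (∀ r, ∑ e ∈ edgeSet V, x r e = 1) ∧
  (∀ r, ∀ e ∈ edgeSet V, x r e ≤ y e) ∧
  (∀ r, ∀ i, ∑ e ∈ (edgeSet V).filter (fun e => i ∈ e), x r e ≤ z i)

/-- Feasibility for the LP relaxation of formulation HLP_MA. -/
def HLPfeasible {V : Type*} [Fintype V] [DecidableEq V] {R : Type*} [Fintype R]
    (z : V → ℝ) (X : R → V → V → ℝ) : Prop :=
  (∀ i, z i ∈ Set.Icc (0 : ℝ) 1) ∧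
  (∀ r, ∀ i j, 0 ≤ X r i j) ∧
  (∀ r, ∑ i, ∑ j, X r i j = 1) ∧
  (∀ r, ∀ i, X r i i + ∑ j ∈ Finset.univ.erase i, (X r i j + X r j i) ≤ z i)

/-- Each edge has an ordered pair of endpoints attaining the aggregated cost. -/
theorem exists_best_pair {V : Type*} {R : Type*} (c : V → V → ℝ) (hdiag : ∀ i, c i i = 0)
    (α γ θ : ℝ) (o d : R → V) (w : R → ℝ) (r : R) (e : Sym2 V) :
    ∃ p : V × V, p.1 ∈ e ∧ p.2 ∈ e ∧
      routeCost c α γ θ o d w r p.1 p.2 = FbarCost c α γ θ o d w r e := by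
  induction e using Sym2.ind with
  | _ i j =>
    have hh : ∀ k, hubCost c γ θ o d w r k = routeCost c α γ θ o d w r k k := by
      intro k
      simp [hubCost, routeCost, hdiag]
    simp only [FbarCost, Sym2.lift_mk, hh]
    rcases min_choice (min (routeCost c α γ θ o d w r i j) (routeCost c α γ θ o d w r j i))
      (min (routeCost c α γ θ o d w r i i) (routeCost c α γ θ o d w r j j)) with h | h
    · rw [h]
      rcases min_choice (routeCost c α γ θ o d w r i j) (routeCost c α γ θ o d w r j i)
        with h | h
      · exact ⟨(i, j), by simp, by simp, h.symm⟩
      · exact ⟨(j, i), by simp, by simp, h.symm⟩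
    · rw [h]
      rcases min_choice (routeCost c α γ θ o d w r i i) (routeCost c α γ θ o d w r j j)
        with h | h
      · exact ⟨(i, i), by simp, by simp, h.symm⟩
      · exact ⟨(j, j), by simp, by simp, h.symm⟩

theorem sum_push {V ι : Type*} [Fintype V] [DecidableEq V] (E : Finset ι) (p : ι → V × V)
    (x : ι → ℝ) (g : V → V → ℝ) :
    ∑ i, ∑ j, g i j * (∑ e ∈ E, if p e = (i, j) then x e else 0) =
      ∑ e ∈ E, g (p e).1 (p e).2 * x e := by
  rw [← Fintype.sum_prod_type' (f := fun i j => g i j * (∑ e ∈ E, if p e = (i, j) then x e else 0))]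
  simp only [Finset.mul_sum]
  rw [Finset.sum_comm]
  refine Finset.sum_congr rfl fun e _ => ?_
  simp

theorem degree_single {V : Type*} [Fintype V] [DecidableEq V] (p : V × V) (t : ℝ) (i : V) :
    (if p = (i, i) then t else 0) + ∑ j ∈ Finset.univ.erase i,
      ((if p = (i, j) then t else 0) + (if p = (j, i) then t else 0)) =
      if p.1 = i ∨ p.2 = i then t else 0 := by
  obtain ⟨a, b⟩ := p
  simp only [Prod.mk.injEq, Finset.sum_add_distrib]
  by_cases ha : a = i <;> by_cases hb : b = i <;> simp [ha, hb, Finset.sum_ite_eq]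

theorem exists_hlp {V : Type*} [Fintype V] [DecidableEq V]
    {R : Type*} [Fintype R]
    (c : V → V → ℝ) (hdiag : ∀ i, c i i = 0) (α γ θ : ℝ)
    (o d : R → V) (w : R → ℝ)
    (z : V → ℝ) (y : Sym2 V → ℝ) (x : R → Sym2 V → ℝ)
    (hfeas : FZPfeasible z y x) :
    ∃ X : R → V → V → ℝ, HLPfeasible z X ∧
        (∑ r, ∑ i, ∑ j, routeCost c α γ θ o d w r i j * X r i j) =
          ∑ r, ∑ e ∈ edgeSet V, FbarCost c α γ θ o d w r e * x r e := by
  obtain ⟨hz, -, hx, hsum, -, hdeg⟩ := hfeas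
  choose p hp1 hp2 hp using exists_best_pair c hdiag α γ θ o d w
  refine ⟨fun r i j => ∑ e ∈ edgeSet V, if p r e = (i, j) then x r e else 0,
    ⟨hz, ?_, ?_, ?_⟩, ?_⟩
  · intro r i j
    refine Finset.sum_nonneg fun e he => ?_
    split_ifs
    · exact hx r e he
    · exact le_rfl
  · intro r
    have h := sum_push (edgeSet V) (p r) (x r) (fun _ _ => 1)
    simp only [one_mul] at h
    rw [h, hsum]
  · intro r i
    refine le_trans ?_ (hdeg r i)
    simp only [← Finset.sum_add_distrib]
    rw [Finset.sum_comm, ← Finset.sum_add_distrib, Finset.sum_filter]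
    refine Finset.sum_le_sum fun e he => ?_
    rw [degree_single]
    by_cases hi : i ∈ e
    · rw [if_pos hi]
      split_ifs
      · exact le_rfl
      · exact hx r e he
    · rw [if_neg hi, if_neg]
      rintro (h | h)
      · exact hi (h ▸ hp1 r e)
      · exact hi (h ▸ hp2 r e)
  · refine Finset.sum_congr rfl fun r _ => ?_
    rw [sum_push (edgeSet V) (p r) (x r) (routeCost c α γ θ o d w r)]
    exact Finset.sum_congr rfl fun e _ => by rw [hp]

/-- from any feasible solution `(z, y, x)` of the LP relaxation of FZ-P one
can build `X ≥ 0` such that `(z, X)` is feasible for the LP relaxation of HLP_MA with the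
same routing cost, `∑_r ∑_{i,j} C_rij X_rij = ∑_r ∑_e F̄_re x_re`; in particular the LP
relaxation optimal value of HLP_MA is at most that of FZ-P. -/
theorem stmt_10 {V : Type*} [Fintype V] [DecidableEq V]
    {R : Type*} [Fintype R] [Nonempty R]
    (c : V → V → ℝ) (hc0 : ∀ i j, 0 ≤ c i j) (hsym : ∀ i j, c i j = c j i)
    (hdiag : ∀ i, c i i = 0) (htri : ∀ i j k, c i k ≤ c i j + c j k)
    (α γ θ : ℝ) (hα0 : 0 ≤ α) (hα1 : α ≤ 1) (hγ : 0 ≤ γ) (hθ : 0 ≤ θ)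
    (o d : R → V) (w : R → ℝ) (hw : ∀ r, 0 ≤ w r)
    (f : V → ℝ) (hf : ∀ i, 0 ≤ f i)
    (z : V → ℝ) (y : Sym2 V → ℝ) (x : R → Sym2 V → ℝ)
    (hfeas : FZPfeasible z y x) :
    (∃ X : R → V → V → ℝ, HLPfeasible z X ∧
        (∑ r, ∑ i, ∑ j, routeCost c α γ θ o d w r i j * X r i j) =
          ∑ r, ∑ e ∈ edgeSet V, FbarCost c α γ θ o d w r e * x r e) ∧
      sInf {t : ℝ | ∃ z' : V → ℝ, ∃ X' : R → V → V → ℝ, HLPfeasible z' X' ∧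
          t = (∑ i, f i * z' i) +
            ∑ r, ∑ i, ∑ j, routeCost c α γ θ o d w r i j * X' r i j} ≤
        sInf {t : ℝ | ∃ z' : V → ℝ, ∃ y' : Sym2 V → ℝ, ∃ x' : R → Sym2 V → ℝ,
          FZPfeasible z' y' x' ∧
          t = (∑ i, f i * z' i) +
            ∑ r, ∑ e ∈ edgeSet V, FbarCost c α γ θ o d w r e * x' r e} := by
  refine ⟨exists_hlp c hdiag α γ θ o d w z y x hfeas, ?_⟩
  refine csInf_le_csInf ?_ ⟨_, z, y, x, hfeas, rfl⟩ ?_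
  · refine ⟨0, ?_⟩
    rintro t ⟨z', X', ⟨hz, hX, -, -⟩, rfl⟩
    refine add_nonneg (Finset.sum_nonneg fun i _ => mul_nonneg (hf i) (hz i).1) ?_
    refine Finset.sum_nonneg fun r _ => Finset.sum_nonneg fun i _ =>
      Finset.sum_nonneg fun j _ => mul_nonneg (mul_nonneg (hw r) ?_) (hX r i j)
    exact add_nonneg (add_nonneg (mul_nonneg hγ (hc0 _ _)) (mul_nonneg hα0 (hc0 _ _)))
      (mul_nonneg hθ (hc0 _ _))
  · rintro t ⟨z', y', x', h', rfl⟩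
    obtain ⟨X', hX', he⟩ := exists_hlp c hdiag α γ θ o d w z' y' x' h'
    exact ⟨z', X', hX', by rw [he]⟩
end

section
/- Let (z, y, x) be any feasible solution of the LP relaxation of FZ-P, i.e. z : V → [0,1], y : E → [0,1], x : R × E → ℝ_{≥0} with Σ_{e∈E} x_re = 1 for all r, x_re ≤ y_e for all r, e, and Σ_{e∈δ(i)} x_re ≤ z_i for all r, i, where R is finite and nonempty. Define y'_e = max_{r∈R} x_re for each e ∈ E. Then (z, y', x) is feasible for the LP relaxation of CF-P: for every r and e = {i,j}, x_re ≤ y'_e, y'_e ≤ z_i and y'_e ≤ z_j, and Σ_{e∈E} x_re = 1; moreover the objective values of (z,y,x) in FZ-P and of (z,y',x) in CF-P coincide. Consequently the optimal value of the LP relaxation of CF-P is at most that of the LP relaxation of FZ-P, i.e. FZ-P is a reinforcement of CF-P. -/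
open Finset

/-- Feasibility for the LP relaxation of formulation CF-P of Contreras and Fernández. -/
noncomputable def CFPfeasible {V : Type*} [Fintype V] [DecidableEq V] {R : Type*} [Fintype R]
    (z : V → ℝ) (y : Sym2 V → ℝ) (x : R → Sym2 V → ℝ) : Prop :=
  (∀ i, z i ∈ Set.Icc (0 : ℝ) 1) ∧
  (∀ e ∈ edgeSet V, y e ∈ Set.Icc (0 : ℝ) 1) ∧
  (∀ r, ∀ e ∈ edgeSet V, 0 ≤ x r e) ∧
  (∀ r, ∑ e ∈ edgeSet V, x r e = 1) ∧
  (∀ r, ∀ e ∈ edgeSet V, x r e ≤ y e) ∧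
  (∀ e ∈ edgeSet V, ∀ i ∈ e, y e ≤ z i)

theorem cfp_of_fzp {V : Type*} [Fintype V] [DecidableEq V]
    {R : Type*} [Fintype R] [Nonempty R]
    (z : V → ℝ) (y : Sym2 V → ℝ) (x : R → Sym2 V → ℝ)
    (hfeas : FZPfeasible z y x)
    (y' : Sym2 V → ℝ)
    (hy' : ∀ e, y' e = Finset.univ.sup' Finset.univ_nonempty fun r : R => x r e) :
    CFPfeasible z y' x := by
  obtain ⟨h1, h2, h3, h4, h5, h6⟩ := hfeas
  have hle : ∀ r e, x r e ≤ y' e := fun r e => by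
    rw [hy' e]
    exact Finset.le_sup' (fun r : R => x r e) (Finset.mem_univ r)
  refine ⟨h1, fun e he => ⟨?_, ?_⟩, h3, h4, fun r e _ => hle r e, fun e he i hi => ?_⟩
  · obtain ⟨r⟩ := ‹Nonempty R›
    exact (h3 r e he).trans (hle r e)
  · rw [hy' e]
    exact Finset.sup'_le _ _ fun r _ => (h5 r e he).trans (h2 e he).2
  · rw [hy' e]
    refine Finset.sup'_le _ _ fun r _ => le_trans ?_ (h6 r i)
    exact Finset.single_le_sum (f := fun e => x r e)
      (fun e' he' => h3 r e' (Finset.mem_filter.1 he').1) (Finset.mem_filter.2 ⟨he, hi⟩)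

theorem neg_abs_le_mul_unit (a t : ℝ) (h0 : 0 ≤ t) (h1 : t ≤ 1) : -|a| ≤ a * t := by
  have h := neg_abs_le a
  have h' := abs_nonneg a
  nlinarith [mul_nonneg h0 (by linarith : 0 ≤ a + |a|), mul_nonneg h' (by linarith : 0 ≤ 1 - t)]

/-- any feasible solution `(z, y, x)` of the LP relaxation of FZ-P yields,
with `y' e = max_{r ∈ R} x r e`, a feasible solution `(z, y', x)` of the LP relaxation of
CF-P with the same objective value; consequently the LP bound of CF-P is at most that of
FZ-P, i.e. FZ-P is a reinforcement of CF-P. -/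
theorem stmt_13 {V : Type*} [Fintype V] [DecidableEq V]
    {R : Type*} [Fintype R] [Nonempty R]
    (c : V → V → ℝ) (α γ θ : ℝ)
    (o d : R → V) (w : R → ℝ)
    (f : V → ℝ)
    (z : V → ℝ) (y : Sym2 V → ℝ) (x : R → Sym2 V → ℝ)
    (hfeas : FZPfeasible z y x)
    (y' : Sym2 V → ℝ)
    (hy' : ∀ e, y' e = Finset.univ.sup' Finset.univ_nonempty fun r : R => x r e) :
    CFPfeasible z y' x ∧
      ((∑ i, f i * z i) + ∑ r, ∑ e ∈ edgeSet V, FbarCost c α γ θ o d w r e * x r e) =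
        ((∑ i, f i * z i) + ∑ r, ∑ e ∈ edgeSet V, FbarCost c α γ θ o d w r e * x r e) ∧
      sInf {t : ℝ | ∃ z' : V → ℝ, ∃ y'' : Sym2 V → ℝ, ∃ x' : R → Sym2 V → ℝ,
          CFPfeasible z' y'' x' ∧
          t = (∑ i, f i * z' i) +
            ∑ r, ∑ e ∈ edgeSet V, FbarCost c α γ θ o d w r e * x' r e} ≤
        sInf {t : ℝ | ∃ z' : V → ℝ, ∃ y'' : Sym2 V → ℝ, ∃ x' : R → Sym2 V → ℝ,
          FZPfeasible z' y'' x' ∧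
          t = (∑ i, f i * z' i) +
            ∑ r, ∑ e ∈ edgeSet V, FbarCost c α γ θ o d w r e * x' r e} := by
  refine ⟨cfp_of_fzp z y x hfeas y' hy', rfl, ?_⟩
  apply csInf_le_csInf
  · refine ⟨(∑ i, -|f i|) + ∑ r, ∑ e ∈ edgeSet V, -|FbarCost c α γ θ o d w r e|, ?_⟩
    rintro t ⟨z', y'', x', ⟨h1, h2, h3, h4, h5, h6⟩, rfl⟩
    refine add_le_add (Finset.sum_le_sum fun i _ => ?_)
      (Finset.sum_le_sum fun r _ => Finset.sum_le_sum fun e he => ?_)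
    · exact neg_abs_le_mul_unit _ _ (h1 i).1 (h1 i).2
    · exact neg_abs_le_mul_unit _ _ (h3 r e he) ((h5 r e he).trans (h2 e he).2)
  · exact ⟨_, z, y, x, hfeas, rfl⟩
  · rintro t ⟨z', y'', x', h, rfl⟩
    exact ⟨z', _, x', cfp_of_fzp z' y'' x' h _ (fun _ => rfl), rfl⟩
end

section
/- Let r be a commodity with sorted routing values v̄_{r1} ≤ … ≤ v̄_{rT_r} (edge positions T^r_y carrying edges e_h, node positions T^r_z carrying nodes i_h), let ȳ ∈ [0,1]^E and z̄ ∈ [0,1]^V satisfy Σ_{h∈T^r_y} ȳ_{e_h} + Σ_{h∈T^r_z} z̄_{i_h} ≥ 1, and let t̄_r be the least t with Σ_{h∈T^r_y, h≤t} ȳ_{e_h} + Σ_{h∈T^r_z, h≤t} z̄_{i_h} ≥ 1. For each node i ∈ V^r fix an incident edge e(i,r) ∈ δ(i), and assume the edges e(i_h, r), h ∈ T^r_z, are pairwise distinct and distinct from every edge e_h, h ∈ T^r_y, and that F̄_{r,e(i,r)} = H_ri for every i ∈ V^r. Define x̄_r : E → ℝ_{≥0} by: x̄_{r,e_h} = ȳ_{e_h}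 for h ∈ T^r_y with h < t̄_r; x̄_{r,e(i_h,r)} = z̄_{i_h} for h ∈ T^r_z with h < t̄_r; the position t̄_r (its edge e_{t̄_r} if t̄_r ∈ T^r_y, or the edge e(i_{t̄_r}, r) if t̄_r ∈ T^r_z) receives the residual value 1 − Σ_{h < t̄_r} ȳ_{e_h} − Σ_{h < t̄_r} z̄_{i_h}; and x̄_{re} = 0 otherwise. Then Σ_{e∈E} x̄_{re} = 1 and the routing cost Σ_{e∈E} F̄_{re}·x̄_{re} equals S_{r t̄_r} = v̄_{r t̄_r}·(1 − Σ_{h < t̄_r} ȳ_{e_h} − Σ_{h < t̄_r} z̄_{i_h}) + Σ_{h∈T^r_y, h < t̄_r} v̄_{rh}·ȳ_{e_h} + Σ_{h∈T^r_z, h < t̄_r} v̄_{rh}·z̄_{i_h}. -/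
open Finset

/-- Weighted double counting: summing a fibrewise sum over all fibres. -/
theorem aux_fiber {E : Type*} [Fintype E] [DecidableEq E] (T : Finset ℕ) (t : ℕ) (k : ℕ → E)
    (g : E → ℝ) (f : ℕ → ℝ) :
    (∑ e : E, g e * ∑ h ∈ T.filter (fun h => h < t ∧ k h = e), f h) =
      ∑ h ∈ T.filter (· < t), g (k h) * f h := by
  rw [← Finset.sum_fiberwise (T.filter (· < t)) k]
  refine Finset.sum_congr rfl fun e _ => ?_
  rw [Finset.mul_sum, Finset.filter_filter]
  refine Finset.sum_congr rfl fun h hh => ?_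
  rw [(Finset.mem_filter.mp hh).2.2]

/-- Lemma 3 of the paper: for a commodity with sorted routing values
`v 1 ≤ … ≤ v Tr` occupying edge positions `Ty` (position `h` carrying edge `er h`, with
`F̄` value `Fb (er h) = v h`) and node positions `Tz` (position `h` carrying node
`ir h ∈ Vr` with single-hub cost `H (ir h) = v h`), activation levels
`ybar, zbar ∈ [0, 1]` whose cumulative value reaches `1` for the first time at position
`tbar`, and a fixed non-traversed incident edge `eir i ∈ δ(i)` for each `i ∈ Vr` with
`F̄` value `Fb (eir i) = H i`, the greedily recovered routing vector `xbar` satisfies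
`∑ e, xbar e = 1` and its routing cost `∑ e, Fb e * xbar e` equals the binding
supermodular right-hand side `S tbar`. -/
theorem stmt_14 {V : Type*} [Fintype V] [DecidableEq V]
    (Tr : ℕ) (hTr : 1 ≤ Tr) (v : ℕ → ℝ)
    (hmono : ∀ h₁ ∈ Finset.Icc 1 Tr, ∀ h₂ ∈ Finset.Icc 1 Tr, h₁ ≤ h₂ → v h₁ ≤ v h₂)
    (Ty Tz : Finset ℕ) (hdisj : Disjoint Ty Tz) (hpart : Ty ∪ Tz = Finset.Icc 1 Tr)
    (er : ℕ → Sym2 V) (ir : ℕ → V)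
    (Fb : Sym2 V → ℝ) (H : V → ℝ) (Vr : Finset V)
    (hFbTy : ∀ h ∈ Ty, Fb (er h) = v h)
    (hHTz : ∀ h ∈ Tz, H (ir h) = v h)
    (hirVr : ∀ h ∈ Tz, ir h ∈ Vr)
    (eir : V → Sym2 V) (hinc : ∀ i ∈ Vr, i ∈ eir i)
    (hFbH : ∀ i ∈ Vr, Fb (eir i) = H i)
    (herinj : Set.InjOn er (Ty : Set ℕ))
    (hdist1 : ∀ h₁ ∈ Tz, ∀ h₂ ∈ Tz, h₁ ≠ h₂ → eir (ir h₁) ≠ eir (ir h₂))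
    (hdist2 : ∀ h₁ ∈ Tz, ∀ h₂ ∈ Ty, eir (ir h₁) ≠ er h₂)
    (ybar : Sym2 V → ℝ) (zbar : V → ℝ)
    (hy : ∀ e, ybar e ∈ Set.Icc (0 : ℝ) 1) (hz : ∀ i, zbar i ∈ Set.Icc (0 : ℝ) 1)
    (hcov : 1 ≤ (∑ h ∈ Ty, ybar (er h)) + ∑ h ∈ Tz, zbar (ir h))
    (tbar : ℕ) (htbmem : tbar ∈ Finset.Icc 1 Tr)
    (htbge : 1 ≤ (∑ h ∈ Ty.filter (· ≤ tbar), ybar (er h)) +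
      ∑ h ∈ Tz.filter (· ≤ tbar), zbar (ir h))
    (htbmin : ∀ t < tbar, (∑ h ∈ Ty.filter (· ≤ t), ybar (er h)) +
      (∑ h ∈ Tz.filter (· ≤ t), zbar (ir h)) < 1)
    (etbar : Sym2 V)
    (hetbar : (tbar ∈ Ty → etbar = er tbar) ∧ (tbar ∈ Tz → etbar = eir (ir tbar)))
    (xbar : Sym2 V → ℝ)
    (hxbar : ∀ e, xbar e =
      (∑ h ∈ Ty.filter (fun h => h < tbar ∧ er h = e), ybar (er h)) +
      (∑ h ∈ Tz.filter (fun h => h < tbar ∧ eir (ir h) = e), zbar (ir h)) +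
      (if e = etbar then
        1 - (∑ h ∈ Ty.filter (· < tbar), ybar (er h)) -
          ∑ h ∈ Tz.filter (· < tbar), zbar (ir h)
      else 0)) :
    (∑ e : Sym2 V, xbar e) = 1 ∧
      (∑ e : Sym2 V, Fb e * xbar e) =
        v tbar * (1 - (∑ h ∈ Ty.filter (· < tbar), ybar (er h)) -
            ∑ h ∈ Tz.filter (· < tbar), zbar (ir h)) +
          (∑ h ∈ Ty.filter (· < tbar), v h * ybar (er h)) +
          ∑ h ∈ Tz.filter (· < tbar), v h * zbar (ir h) := by
  have key : ∀ g : Sym2 V → ℝ, (∑ e : Sym2 V, g e * xbar e) =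
      (∑ h ∈ Ty.filter (· < tbar), g (er h) * ybar (er h)) +
      (∑ h ∈ Tz.filter (· < tbar), g (eir (ir h)) * zbar (ir h)) +
      g etbar * (1 - (∑ h ∈ Ty.filter (· < tbar), ybar (er h)) -
          ∑ h ∈ Tz.filter (· < tbar), zbar (ir h)) := by
    intro g
    rw [← aux_fiber Ty tbar er g, ← aux_fiber Tz tbar (fun h => eir (ir h)) g]
    simp only [hxbar, mul_add, Finset.sum_add_distrib, mul_ite, mul_zero,
      Finset.sum_ite_eq', Finset.mem_univ, if_true]
  constructor
  · have h1 := key (fun _ => 1)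
    simp only [one_mul] at h1
    rw [h1]
    ring
  · have hF : Fb etbar = v tbar := by
      rw [← hpart, Finset.mem_union] at htbmem
      rcases htbmem with h | h
      · rw [hetbar.1 h, hFbTy _ h]
      · rw [hetbar.2 h, hFbH _ (hirVr _ h), hHTz _ h]
    have e1 : (∑ h ∈ Ty.filter (· < tbar), Fb (er h) * ybar (er h)) =
        ∑ h ∈ Ty.filter (· < tbar), v h * ybar (er h) :=
      Finset.sum_congr rfl fun h hh => by rw [hFbTy _ (Finset.mem_filter.mp hh).1]
    have e2 : (∑ h ∈ Tz.filter (· < tbar), Fb (eir (ir h)) * zbar (ir h)) =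
        ∑ h ∈ Tz.filter (· < tbar), v h * zbar (ir h) :=
      Finset.sum_congr rfl fun h hh => by
        have hm := (Finset.mem_filter.mp hh).1
        rw [hFbH _ (hirVr _ hm), hHTz _ hm]
    rw [key Fb, hF, e1, e2]
    ring
end

section
/- Let r be a commodity with sorted routing values v̄_{r1} ≤ … ≤ v̄_{rT_r} (edge positions T^r_y carrying edges e_h, node positions T^r_z carrying nodes i_h), and let y* : E → {0,1} and z* : V → {0,1} be binary vectors such that the set { t : (t ∈ T^r_y and y*_{e_t} = 1) or (t ∈ T^r_z and z*_{i_t} = 1) } is nonempty, with least element t*_r. Then the least real number η^r satisfying, for all t ∈ {1,…,T_r}, η^r ≥ v̄_{rt} + Σ_{h∈T^r_y, h<t}(v̄_{rh} − v̄_{rt})·y*_{e_h} + Σ_{h∈T^r_z, h<t}(v̄_{rh} − v̄_{rt})·z*_{i_h}, equals v̄_{r t*_r}. Hence, at binary optimal values (z*, y*) of FZ-S, the optimal routing cost of each commodity r is v̄_{r t*_r}, and an optimal routing for FZ-P routes commodity r entirely through the option (edge e_{t*_r} or single hub i_{t*_r}) occupying position t*_r. -/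
open Finset

/-- Lemma 2 of the paper: for a commodity with sorted routing values
`v 1 ≤ … ≤ v Tr` occupying edge positions `Ty` (position `t` carrying edge `er t`) and
node positions `Tz` (position `t` carrying node `ir t`), and binary activation vectors
`ys` (edges) and `zs` (nodes) with at least one activated position, the least real `η`
satisfying all supermodular constraints of FZ-S equals `v tstar`, where `tstar` is the
least activated position. -/
theorem stmt_15 {V : Type*} [Fintype V] [DecidableEq V]
    (Tr : ℕ) (hTr : 1 ≤ Tr) (v : ℕ → ℝ)
    (hmono : ∀ h₁ ∈ Finset.Icc 1 Tr, ∀ h₂ ∈ Finset.Icc 1 Tr, h₁ ≤ h₂ → v h₁ ≤ v h₂)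
    (Ty Tz : Finset ℕ) (hdisj : Disjoint Ty Tz) (hpart : Ty ∪ Tz = Finset.Icc 1 Tr)
    (er : ℕ → Sym2 V) (ir : ℕ → V)
    (ys : Sym2 V → ℝ) (zs : V → ℝ)
    (hy01 : ∀ e, ys e = 0 ∨ ys e = 1) (hz01 : ∀ i, zs i = 0 ∨ zs i = 1)
    (tstar : ℕ)
    (hts : (tstar ∈ Ty ∧ ys (er tstar) = 1) ∨ (tstar ∈ Tz ∧ zs (ir tstar) = 1))
    (htsmin : ∀ t, t < tstar →
      ¬((t ∈ Ty ∧ ys (er t) = 1) ∨ (t ∈ Tz ∧ zs (ir t) = 1))) :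
    IsLeast {η : ℝ | ∀ t ∈ Finset.Icc 1 Tr,
        v t + (∑ h ∈ Ty.filter (· < t), (v h - v t) * ys (er h)) +
          (∑ h ∈ Tz.filter (· < t), (v h - v t) * zs (ir h)) ≤ η}
      (v tstar) := by
  have hyin : ∀ h ∈ Ty, h ∈ Finset.Icc 1 Tr := fun h hh => hpart ▸ Finset.mem_union_left _ hh
  have hzin : ∀ h ∈ Tz, h ∈ Finset.Icc 1 Tr := fun h hh => hpart ▸ Finset.mem_union_right _ hh
  have htin : tstar ∈ Finset.Icc 1 Tr := by
    rcases hts with h | h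
    · exact hyin _ h.1
    · exact hzin _ h.1
  constructor
  · intro t ht
    have hy : ∀ h ∈ Ty.filter (· < t), (v h - v t) * ys (er h) ≤ 0 := by
      intro h hh
      rw [Finset.mem_filter] at hh
      have := hmono h (hyin h hh.1) t ht hh.2.le
      rcases hy01 (er h) with e | e <;> rw [e] <;> linarith
    have hz : ∀ h ∈ Tz.filter (· < t), (v h - v t) * zs (ir h) ≤ 0 := by
      intro h hh
      rw [Finset.mem_filter] at hh
      have := hmono h (hzin h hh.1) t ht hh.2.le
      rcases hz01 (ir h) with e | e <;> rw [e] <;> linarith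
    have sy := Finset.sum_nonpos hy
    have sz := Finset.sum_nonpos hz
    rcases le_or_gt t tstar with hle | hlt
    · have := hmono t ht tstar htin hle
      linarith
    · rcases hts with ⟨hm, h1⟩ | ⟨hm, h1⟩
      · have hmem : tstar ∈ Ty.filter (· < t) := Finset.mem_filter.2 ⟨hm, hlt⟩
        have e := Finset.add_sum_erase _ (fun h => (v h - v t) * ys (er h)) hmem
        have := Finset.sum_nonpos (fun h hh => hy h (Finset.mem_of_mem_erase (a := tstar) hh))
        simp only [h1] at e
        linarith
      · have hmem : tstar ∈ Tz.filter (· < t) := Finset.mem_filter.2 ⟨hm, hlt⟩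
        have e := Finset.add_sum_erase _ (fun h => (v h - v t) * zs (ir h)) hmem
        have := Finset.sum_nonpos (fun h hh => hz h (Finset.mem_of_mem_erase (a := tstar) hh))
        simp only [h1] at e
        linarith
  · intro η hη
    have key := hη tstar htin
    rw [Finset.sum_eq_zero, Finset.sum_eq_zero] at key
    · linarith
    · intro h hh
      rw [Finset.mem_filter] at hh
      rcases hz01 (ir h) with e | e
      · rw [e, mul_zero]
      · exact absurd (Or.inr ⟨hh.1, e⟩) (htsmin h hh.2)
    · intro h hh
      rw [Finset.mem_filter] at hh
      rcases hy01 (er h) with e | e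
      · rw [e, mul_zero]
      · exact absurd (Or.inl ⟨hh.1, e⟩) (htsmin h hh.2)
end

section
/- Let (z, y, x) be an integer feasible solution of formulation CF-P, i.e. z : V → {0,1}, y : E → {0,1}, x : R × E → {0,1} with Σ_{e∈E} x_re = 1 for every commodity r, x_re ≤ y_e for all r, e, and y_e ≤ z_i, y_e ≤ z_j for every edge e = {i,j}. Then for every commodity r and every node i ∈ V, Σ_{e∈δ(i)} x_re ≤ z_i; that is, the reinforcing constraints of formulation FZ-P are valid inequalities for the integer solutions of CF-P. -/
open Finset

/-- for any integer feasible solution `(z, y, x)` of formulation CF-P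
(binary variables, each commodity routed via exactly one activated interhub edge, and both
endpoints of every activated edge open as hubs), the reinforcing constraints of FZ-P hold:
for every commodity `r` and node `i`, `∑_{e ∈ δ(i)} x r e ≤ z i`. -/
theorem stmt_16 {V : Type*} [Fintype V] [DecidableEq V]
    {R : Type*} [Fintype R]
    (z : V → ℝ) (y : Sym2 V → ℝ) (x : R → Sym2 V → ℝ)
    (hz01 : ∀ i, z i = 0 ∨ z i = 1)
    (hy01 : ∀ e ∈ edgeSet V, y e = 0 ∨ y e = 1)
    (hx01 : ∀ r : R, ∀ e ∈ edgeSet V, x r e = 0 ∨ x r e = 1)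
    (hroute : ∀ r : R, ∑ e ∈ edgeSet V, x r e = 1)
    (hxy : ∀ r : R, ∀ e ∈ edgeSet V, x r e ≤ y e)
    (hyz : ∀ e ∈ edgeSet V, ∀ i ∈ e, y e ≤ z i) :
    ∀ (r : R) (i : V), ∑ e ∈ (edgeSet V).filter (fun e => i ∈ e), x r e ≤ z i := by
  intro r i
  rcases hz01 i with h | h
  · rw [h]
    apply Finset.sum_nonpos
    intro e he
    rw [Finset.mem_filter] at he
    have h1 := hxy r e he.1
    have h2 := hyz e he.1 i he.2
    linarith
  · rw [h, ← hroute r]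
    apply Finset.sum_le_sum_of_subset_of_nonneg (Finset.filter_subset _ _)
    intro e he _
    rcases hx01 r e he with h0 | h0 <;> rw [h0]
    exact zero_le_one
end
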